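/- Let R > 0 and 3R/2 ≤ s < t ≤ 2R, let v : ℝ³ → ℝ³ be a smooth vector field and θ : ℝ³ → ℝ a smooth function, and set J₆ = (1/(t−s)) ∫_{B_t ∖ B_s} |v||θ| dx. Let q ∈ [1, 2) and r ∈ [1, 2). Then J₆ ≤ (1/(t−s)) ‖v‖_{L^q(B_t ∖ B_R)}^{2q/(6−q)} ‖θ‖_{L^r(B_t ∖ B_R)}^{2r/(6−r)} ‖v‖_{L⁶(B_t ∖ B_R)}^{3(2−q)/(6−q)} ‖θ‖_{L⁶(B_t ∖ B_R)}^{3(2−r)/(6−r)}. -/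

import Mathlib

/-!
By the Cauchy–Schwarz inequality `∫ |v||θ| ≤ ‖v‖₂ ‖θ‖₂`, and each `L²` norm is interpolated between
`L^q` (resp. `L^r`) and `L⁶`: since `1/2 = a/q + b/6` with `a = 2q/(6 - q)`, `b = 3(2 - q)/(6 - q)`
and `a + b = 1`, Hölder's inequality applied to `|f| = |f|^a |f|^b` gives `‖f‖₂ ≤ ‖f‖_q^a ‖f‖₆^b`.
-/

open MeasureTheory Filter Metric

noncomputable section

/-- `L^p` norm of a scalar function on a set `E ⊆ ℝ³`. -/
def lpS (g : EuclideanSpace ℝ (Fin 3) → ℝ) (p : ℝ) (E : Set (EuclideanSpace ℝ (Fin 3))) : ℝ :=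
  (∫ x in E, |g x| ^ p) ^ (1 / p)

section Interpolation

variable {α E F : Type*} [MeasurableSpace α] {μ : Measure α}
  [NormedAddCommGroup E] [NormedAddCommGroup F] {f : α → E} {g : α → F}
  {p p₀ p₁ : ENNReal} {a b : ℝ}

theorem eLpNorm_le_eLpNorm_rpow_mul_eLpNorm_rpow (hf : AEStronglyMeasurable f μ)
    (ha : 0 < a) (hb : 0 < b) (hab : a + b = 1)
    (hp : p⁻¹ = ENNReal.ofReal a / p₀ + ENNReal.ofReal b / p₁) :
    eLpNorm f p μ ≤ eLpNorm f p₀ μ ^ a * eLpNorm f p₁ μ ^ b := by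
  have ha₀ : ENNReal.ofReal a ≠ 0 := by simpa using ha
  have hb₀ : ENNReal.ofReal b ≠ 0 := by simpa using hb
  have : ENNReal.HolderTriple (p₀ / ENNReal.ofReal a) (p₁ / ENNReal.ofReal b) p := ⟨by
    rw [ENNReal.inv_div (.inl ENNReal.ofReal_ne_top) (.inl ha₀),
      ENNReal.inv_div (.inl ENNReal.ofReal_ne_top) (.inl hb₀), hp]⟩
  have hf_rpow {c : ℝ} (hc : 0 < c) : AEStronglyMeasurable (fun x ↦ ‖f x‖ ^ c) μ :=
    (Real.continuous_rpow_const hc.le).comp_aestronglyMeasurable hf.norm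
  calc eLpNorm f p μ
      = eLpNorm ((fun x ↦ ‖f x‖ ^ a) • fun x ↦ ‖f x‖ ^ b) p μ := by
        refine (eLpNorm_norm f).symm.trans (congrArg (eLpNorm · p μ) (funext fun x ↦ ?_))
        simp [← Real.rpow_add_of_nonneg (norm_nonneg (f x)) ha.le hb.le, hab]
    _ ≤ eLpNorm (fun x ↦ ‖f x‖ ^ a) (p₀ / ENNReal.ofReal a) μ *
          eLpNorm (fun x ↦ ‖f x‖ ^ b) (p₁ / ENNReal.ofReal b) μ :=
        eLpNorm_smul_le_mul_eLpNorm (hf_rpow hb) (hf_rpow ha)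
    _ = eLpNorm f p₀ μ ^ a * eLpNorm f p₁ μ ^ b := by
        rw [eLpNorm_norm_rpow f ha, eLpNorm_norm_rpow f hb,
          ENNReal.div_mul_cancel ha₀ ENNReal.ofReal_ne_top,
          ENNReal.div_mul_cancel hb₀ ENNReal.ofReal_ne_top]

theorem memLp_of_interpolation (hf₀ : MemLp f p₀ μ) (hf₁ : MemLp f p₁ μ)
    (ha : 0 < a) (hb : 0 < b) (hab : a + b = 1)
    (hp : p⁻¹ = ENNReal.ofReal a / p₀ + ENNReal.ofReal b / p₁) :
    MemLp f p μ :=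
  ⟨hf₀.1, (eLpNorm_le_eLpNorm_rpow_mul_eLpNorm_rpow hf₀.1 ha hb hab hp).trans_lt <|
    ENNReal.mul_lt_top (ENNReal.rpow_lt_top_of_nonneg ha.le hf₀.eLpNorm_ne_top)
      (ENNReal.rpow_lt_top_of_nonneg hb.le hf₁.eLpNorm_ne_top)⟩

theorem lpNorm_le_lpNorm_rpow_mul_lpNorm_rpow (hf₀ : MemLp f p₀ μ) (hf₁ : MemLp f p₁ μ)
    (ha : 0 < a) (hb : 0 < b) (hab : a + b = 1)
    (hp : p⁻¹ = ENNReal.ofReal a / p₀ + ENNReal.ofReal b / p₁) :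
    lpNorm f p μ ≤ lpNorm f p₀ μ ^ a * lpNorm f p₁ μ ^ b := by
  simp only [← toReal_eLpNorm hf₀.1, ENNReal.toReal_rpow, ← ENNReal.toReal_mul]
  refine ENNReal.toReal_mono (ENNReal.mul_ne_top ?_ ?_)
    (eLpNorm_le_eLpNorm_rpow_mul_eLpNorm_rpow hf₀.1 ha hb hab hp)
  · exact ENNReal.rpow_ne_top_of_nonneg ha.le hf₀.eLpNorm_ne_top
  · exact ENNReal.rpow_ne_top_of_nonneg hb.le hf₁.eLpNorm_ne_top

theorem integral_norm_mul_norm_le_lpNorm_mul_lpNorm [ENNReal.HolderConjugate p₀ p₁]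
    (hf : MemLp f p₀ μ) (hg : MemLp g p₁ μ) :
    ∫ x, ‖f x‖ * ‖g x‖ ∂μ ≤ lpNorm f p₀ μ * lpNorm g p₁ μ := by
  calc ∫ x, ‖f x‖ * ‖g x‖ ∂μ = lpNorm ((‖f ·‖) • (‖g ·‖)) 1 μ := by
        rw [lpNorm_one_eq_integral_norm (hf.1.norm.smul hg.1.norm)]
        simp
    _ ≤ lpNorm (‖f ·‖) p₀ μ * lpNorm (‖g ·‖) p₁ μ := by
        rw [← toReal_eLpNorm (hf.1.norm.smul hg.1.norm), ← toReal_eLpNorm hf.1.norm,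
          ← toReal_eLpNorm hg.1.norm, ← ENNReal.toReal_mul]
        exact ENNReal.toReal_mono
          (ENNReal.mul_ne_top hf.norm.eLpNorm_ne_top hg.norm.eLpNorm_ne_top)
          (eLpNorm_smul_le_mul_eLpNorm hg.1.norm hf.1.norm)
    _ = lpNorm f p₀ μ * lpNorm g p₁ μ := by rw [lpNorm_norm hf.1, lpNorm_norm hg.1]

end Interpolation

section InterpolationTwo

variable {α E : Type*} [MeasurableSpace α] {μ : Measure α} [NormedAddCommGroup E] {f : α → E}
  {q : ℝ}

theorem two_mul_div_add_three_mul_div_eq_one (hq6 : q ≠ 6) :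
    2 * q / (6 - q) + 3 * (2 - q) / (6 - q) = 1 := by
  have h6 : 6 - q ≠ 0 := sub_ne_zero.mpr hq6.symm
  field_simp
  ring

theorem two_inv_eq_ofReal_div_add_ofReal_div (hq : 0 < q) (hq2 : q < 2) :
    (2 : ENNReal)⁻¹ = ENNReal.ofReal (2 * q / (6 - q)) / ENNReal.ofReal q +
      ENNReal.ofReal (3 * (2 - q) / (6 - q)) / 6 := by
  have h6 : 0 < 6 - q := by linarith
  have hb : 0 ≤ 3 * (2 - q) / (6 - q) := div_nonneg (by linarith) h6.le
  rw [← ENNReal.ofReal_ofNat 2, ← ENNReal.ofReal_ofNat 6, ← ENNReal.ofReal_inv_of_pos two_pos,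
    ← ENNReal.ofReal_div_of_pos hq, ← ENNReal.ofReal_div_of_pos (by norm_num),
    ← ENNReal.ofReal_add (by positivity) (div_nonneg hb (by norm_num))]
  congr 1
  field_simp
  ring

theorem memLp_two_of_memLp_of_memLp_six (hq : 0 < q) (hq2 : q < 2)
    (hfq : MemLp f (ENNReal.ofReal q) μ) (hf6 : MemLp f 6 μ) : MemLp f 2 μ :=
  memLp_of_interpolation hfq hf6 (div_pos (by linarith) (by linarith))
    (div_pos (by linarith) (by linarith))
    (two_mul_div_add_three_mul_div_eq_one (by linarith))
    (two_inv_eq_ofReal_div_add_ofReal_div hq hq2)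

theorem lpNorm_two_le_lpNorm_rpow_mul_lpNorm_six_rpow (hq : 0 < q) (hq2 : q < 2)
    (hfq : MemLp f (ENNReal.ofReal q) μ) (hf6 : MemLp f 6 μ) :
    lpNorm f 2 μ ≤ lpNorm f (ENNReal.ofReal q) μ ^ (2 * q / (6 - q)) *
      lpNorm f 6 μ ^ (3 * (2 - q) / (6 - q)) :=
  lpNorm_le_lpNorm_rpow_mul_lpNorm_rpow hfq hf6 (div_pos (by linarith) (by linarith))
    (div_pos (by linarith) (by linarith))
    (two_mul_div_add_three_mul_div_eq_one (by linarith))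
    (two_inv_eq_ofReal_div_add_ofReal_div hq hq2)

end InterpolationTwo

theorem memLp_restrict_of_isBounded_of_continuousOn_closure {X E : Type*} [PseudoMetricSpace X]
    [ProperSpace X] [MeasurableSpace X] [OpensMeasurableSpace X] {μ : Measure X}
    [IsFiniteMeasureOnCompacts μ] [NormedAddCommGroup E] {f : X → E} {S : Set X}
    (hS : Bornology.IsBounded S) (hf : ContinuousOn f (closure S)) (p : ENNReal) :
    MemLp f p (μ.restrict S) := by
  have hK : IsCompact (closure S) := hS.isCompact_closure
  have hK_meas : MeasurableSet (closure S) := isClosed_closure.measurableSet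
  obtain ⟨C, hC⟩ := hK.exists_bound_of_continuousOn hf
  have : IsFiniteMeasure (μ.restrict (closure S)) := isFiniteMeasure_restrict.mpr hK.measure_ne_top
  have hf_closure : MemLp f p (μ.restrict (closure S)) :=
    .of_bound (hf.aestronglyMeasurable_of_isCompact hK hK_meas) C <|
      ae_restrict_of_forall_mem hK_meas hC
  exact hf_closure.mono_measure (Measure.restrict_mono subset_closure le_rfl)

theorem lpS_eq_lpNorm {g : EuclideanSpace ℝ (Fin 3) → ℝ} {p : ℝ}
    {S : Set (EuclideanSpace ℝ (Fin 3))} (hp : 0 < p)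
    (hg : AEStronglyMeasurable g (volume.restrict S)) :
    lpS g p S = lpNorm g (ENNReal.ofReal p) (volume.restrict S) := by
  rw [lpNorm_eq_integral_norm_rpow_toReal (by simpa using hp) ENNReal.ofReal_ne_top hg,
    ENNReal.toReal_ofReal hp.le, lpS, one_div]
  simp only [Real.norm_eq_abs]

theorem J6_estimate_ii_general {X E F : Type*} [PseudoMetricSpace X] [MeasurableSpace X]
    [NormedAddCommGroup E] [NormedAddCommGroup F] {μ : Measure X} {x₀ : X} {R s t q r : ℝ}
    (hRs : R ≤ s) (hst : s < t) (hq : 0 < q) (hq2 : q < 2) (hr : 0 < r) (hr2 : r < 2)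
    {v : X → E} {θ : X → F}
    (hvq : MemLp v (ENNReal.ofReal q) (μ.restrict (ball x₀ t \ ball x₀ R)))
    (hv6 : MemLp v 6 (μ.restrict (ball x₀ t \ ball x₀ R)))
    (hθr : MemLp θ (ENNReal.ofReal r) (μ.restrict (ball x₀ t \ ball x₀ R)))
    (hθ6 : MemLp θ 6 (μ.restrict (ball x₀ t \ ball x₀ R))) :
    (1 / (t - s)) * (∫ x in ball x₀ t \ ball x₀ s, ‖v x‖ * ‖θ x‖ ∂μ) ≤
      (1 / (t - s))
        * lpNorm v (ENNReal.ofReal q) (μ.restrict (ball x₀ t \ ball x₀ R)) ^ (2 * q / (6 - q))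
        * lpNorm θ (ENNReal.ofReal r) (μ.restrict (ball x₀ t \ ball x₀ R)) ^ (2 * r / (6 - r))
        * lpNorm v 6 (μ.restrict (ball x₀ t \ ball x₀ R)) ^ (3 * (2 - q) / (6 - q))
        * lpNorm θ 6 (μ.restrict (ball x₀ t \ ball x₀ R)) ^ (3 * (2 - r) / (6 - r)) := by
  set A := ball x₀ t \ ball x₀ R
  have hv2 : MemLp v 2 (μ.restrict A) := memLp_two_of_memLp_of_memLp_six hq hq2 hvq hv6
  have hθ2 : MemLp θ 2 (μ.restrict A) := memLp_two_of_memLp_of_memLp_six hr hr2 hθr hθ6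
  have hsub : ball x₀ t \ ball x₀ s ⊆ A := Set.sdiff_subset_sdiff_right (ball_subset_ball hRs)
  have henlarge : ∫ x in ball x₀ t \ ball x₀ s, ‖v x‖ * ‖θ x‖ ∂μ ≤ ∫ x in A, ‖v x‖ * ‖θ x‖ ∂μ :=
    setIntegral_mono_set (hv2.norm.integrable_mul hθ2.norm)
      (.of_forall fun x ↦ mul_nonneg (norm_nonneg _) (norm_nonneg _)) hsub.eventuallyLE
  have hholder := integral_norm_mul_norm_le_lpNorm_mul_lpNorm hv2 hθ2
  have hinterp := mul_le_mul (lpNorm_two_le_lpNorm_rpow_mul_lpNorm_six_rpow hq hq2 hvq hv6)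
    (lpNorm_two_le_lpNorm_rpow_mul_lpNorm_six_rpow hr hr2 hθr hθ6) lpNorm_nonneg
    (mul_nonneg (Real.rpow_nonneg lpNorm_nonneg _) (Real.rpow_nonneg lpNorm_nonneg _))
  have hts : 0 ≤ 1 / (t - s) := one_div_nonneg.mpr (sub_nonneg.mpr hst.le)
  refine (mul_le_mul_of_nonneg_left (henlarge.trans (hholder.trans hinterp)) hts).trans_eq ?_
  ring

theorem J6_estimate_ii (R s t : ℝ) (hR : 0 < R) (hs : 3 * R / 2 ≤ s) (hst : s < t)
    (ht : t ≤ 2 * R) (v : EuclideanSpace ℝ (Fin 3) → EuclideanSpace ℝ (Fin 3))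
    (θ : EuclideanSpace ℝ (Fin 3) → ℝ)
    (hv : ContDiff ℝ (⊤ : ℕ∞) v) (hθ : ContDiff ℝ (⊤ : ℕ∞) θ)
    (q r : ℝ) (hq1 : 1 ≤ q) (hq2 : q < 2) (hr1 : 1 ≤ r) (hr2 : r < 2) :
    (1 / (t - s)) * (∫ x in ball (0 : EuclideanSpace ℝ (Fin 3)) t \ ball 0 s,
        ‖v x‖ * |θ x|) ≤
      (1 / (t - s)) * lpS (fun x => ‖v x‖) q (ball 0 t \ ball 0 R) ^ (2 * q / (6 - q))
        * lpS θ r (ball 0 t \ ball 0 R) ^ (2 * r / (6 - r))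
        * lpS (fun x => ‖v x‖) 6 (ball 0 t \ ball 0 R) ^ (3 * (2 - q) / (6 - q))
        * lpS θ 6 (ball 0 t \ ball 0 R) ^ (3 * (2 - r) / (6 - r)) := by
  have hA : Bornology.IsBounded (ball (0 : EuclideanSpace ℝ (Fin 3)) t \ ball 0 R) :=
    isBounded_ball.subset Set.sdiff_subset
  have hvA (p : ENNReal) : MemLp v p (volume.restrict (ball 0 t \ ball 0 R)) :=
    memLp_restrict_of_isBounded_of_continuousOn_closure hA hv.continuous.continuousOn p
  have hθA (p : ENNReal) : MemLp θ p (volume.restrict (ball 0 t \ ball 0 R)) :=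
    memLp_restrict_of_isBounded_of_continuousOn_closure hA hθ.continuous.continuousOn p
  have hq : 0 < q := by linarith
  have hr : 0 < r := by linarith
  rw [lpS_eq_lpNorm hq (hvA 6).1.norm, lpS_eq_lpNorm (by norm_num) (hvA 6).1.norm,
    lpS_eq_lpNorm hr (hθA 6).1, lpS_eq_lpNorm (by norm_num) (hθA 6).1,
    lpNorm_norm (hvA 6).1, lpNorm_norm (hvA 6).1, ENNReal.ofReal_ofNat]
  exact J6_estimate_ii_general (by linarith) hst hq hq2 hr hr2 (hvA _) (hvA _) (hθA _) (hθA _)
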